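/- arXiv:1809.11162 — 2 statements merged into one kernel-verified Lean document; each statement's English description precedes it below -/
import Mathlib

section
/- For every d ≥ 1 and every Hermitian d×d complex matrix X, (d+1)·∫_{S^d} d·⟨v|X|v⟩ · |v⟩⟨v| dv = X + tr(X)·I, where the integral is taken entrywise with respect to the uniform probability measure dv on the unit sphere S^d of ℂ^d. -/
/-!
Unitary invariance determines all fourth moments `∫ vᵢ v̄ⱼ vₖ v̄ₗ dμ`. Invariance under the
diagonal unitary with the single entry `I` at one coordinate kills every moment in which the
indices `{i, k}` and `{j, l}` do not agree as multisets (`fourthMoment_eq_zero`). Invariance under a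
reflection mixing two coordinates `p ≠ q` gives a linear relation between `∫ |v_p|⁴`, `∫ |v_q|⁴`
and `∫ |v_p|²|v_q|²` (`fourthMoment_tilt`); together with the relation for `q, p` it forces
`∫ |v_p|⁴ = ∫ |v_q|⁴ = 2 ∫ |v_p|²|v_q|²`. The common value follows by integrating
`(∑ |v_p|²)² = 1` (`sum_fourthMoment`), so that
`d(d+1) ∫ vᵢ v̄ⱼ vₖ v̄ₗ = δᵢⱼδₖₗ + δᵢₗδₖⱼ` (`fourthMoment_eq`). Expanding `⟨v|X|v⟩` in the entries of
`X` then gives the claim.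
-/

open MeasureTheory Matrix Finset
open scoped BigOperators Kronecker ComplexOrder

noncomputable section

/-- The rank-one projector `|v⟩⟨v|`. -/
def projOp {ι : Type*} (v : ι → ℂ) : Matrix ι ι ℂ :=
  Matrix.vecMulVec v (star v)

/-- `μ` is the uniform (Haar-induced) probability measure on the unit sphere of `ℂ^d`:
it is a probability measure carried by the unit sphere that is invariant under every
unitary transformation.  (These properties determine it uniquely.) -/
def IsUniformSphereMeasure {d : ℕ} (μ : Measure (Fin d → ℂ)) : Prop :=
  IsProbabilityMeasure μ ∧
    μ {v | star v ⬝ᵥ v ≠ 1} = 0 ∧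
    ∀ U : Matrix (Fin d) (Fin d) ℂ, U ∈ unitary (Matrix (Fin d) (Fin d) ℂ) →
      Measure.map U.mulVec μ = μ

/-- The outcome distribution of the uniform POVM `{d |v⟩⟨v| dv}` on the state `ρ`:
the measure with density `v ↦ d ⟨v|ρ|v⟩` with respect to the uniform sphere measure. -/
def uniformBorn {d : ℕ} (μ : Measure (Fin d → ℂ)) (ρ : Matrix (Fin d) (Fin d) ℂ) :
    Measure (Fin d → ℂ) :=
  μ.withDensity fun v => ENNReal.ofReal ((d : ℝ) * (star v ⬝ᵥ ρ.mulVec v).re)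

/-- The single-sample least-squares random matrix `X = (d+1)|v⟩⟨v| − I` for the
uniform POVM. -/
def uniformX {d : ℕ} (v : Fin d → ℂ) : Matrix (Fin d) (Fin d) ℂ :=
  ((d : ℂ) + 1) • projOp v - 1

/-! ### Fourth moments and unitary invariance -/

/-- The fourth moment `∫ vᵢ v̄ⱼ vₖ v̄ₗ dμ`. -/
def fourthMoment {d : ℕ} (μ : Measure (Fin d → ℂ)) (i j k l : Fin d) : ℂ :=
  ∫ v, v i * star (v j) * (v k * star (v l)) ∂μ

lemma norm_coord_le_one {d : ℕ} {v : Fin d → ℂ} (hv : star v ⬝ᵥ v = 1) (i : Fin d) :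
    ‖v i‖ ≤ 1 := by
  have h : (∑ k, ‖v k‖ ^ 2 : ℝ) = 1 := by
    have h' : ((∑ k, ‖v k‖ ^ 2 : ℝ) : ℂ) = 1 := by
      rw [← hv]
      simp only [dotProduct, Complex.ofReal_sum, Pi.star_apply]
      refine Finset.sum_congr rfl fun k _ => ?_
      rw [Complex.star_def, Complex.conj_mul']
      push_cast
      rfl
    exact_mod_cast h'
  have h2 : ‖v i‖ ^ 2 ≤ ∑ k, ‖v k‖ ^ 2 :=
    Finset.single_le_sum (f := fun k => ‖v k‖ ^ 2) (fun k _ => by positivity)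
      (Finset.mem_univ i)
  nlinarith [norm_nonneg (v i)]

lemma ae_mem_sphere {d : ℕ} {μ : Measure (Fin d → ℂ)} (hμ : IsUniformSphereMeasure μ) :
    ∀ᵐ v ∂μ, star v ⬝ᵥ v = 1 := by
  rw [ae_iff]
  exact hμ.2.1

lemma integrable_fourth {d : ℕ} {μ : Measure (Fin d → ℂ)} (hμ : IsUniformSphereMeasure μ)
    (i j k l : Fin d) :
    Integrable (fun v : Fin d → ℂ => v i * star (v j) * (v k * star (v l))) μ := by
  have := hμ.1
  refine Integrable.of_bound (C := 1) ?_ ?_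
  · exact (by fun_prop : Continuous fun v : Fin d → ℂ =>
      v i * star (v j) * (v k * star (v l))).aestronglyMeasurable
  · filter_upwards [ae_mem_sphere hμ] with v hv
    simp only [norm_mul, norm_star]
    have hi := norm_coord_le_one hv i
    have hj := norm_coord_le_one hv j
    have hk := norm_coord_le_one hv k
    have hl := norm_coord_le_one hv l
    exact mul_le_one₀ (mul_le_one₀ hi (norm_nonneg _) hj) (by positivity)
      (mul_le_one₀ hk (norm_nonneg _) hl)

lemma fourthMoment_unitary {d : ℕ} {μ : Measure (Fin d → ℂ)} (hμ : IsUniformSphereMeasure μ)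
    {U : Matrix (Fin d) (Fin d) ℂ} (hU : U ∈ unitary (Matrix (Fin d) (Fin d) ℂ))
    (i j k l : Fin d) :
    fourthMoment μ i j k l = ∫ v, U.mulVec v i * star (U.mulVec v j) *
      (U.mulVec v k * star (U.mulVec v l)) ∂μ := by
  have hc : Continuous U.mulVec := by fun_prop
  unfold fourthMoment
  conv_lhs => rw [← hμ.2.2 U hU]
  rw [integral_map hc.aemeasurable]
  exact (by fun_prop : Continuous fun v : Fin d → ℂ =>
      v i * star (v j) * (v k * star (v l))).aestronglyMeasurable

/-! ### Vanishing of unpaired moments -/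

/-- Invariance under the diagonal unitary with entry `I` at `p` and `1` elsewhere: the moment is
fixed by multiplication by the resulting phase. -/
lemma fourthMoment_phase {d : ℕ} {μ : Measure (Fin d → ℂ)} (hμ : IsUniformSphereMeasure μ)
    (p i j k l : Fin d) :
    fourthMoment μ i j k l =
      ((if i = p then Complex.I else 1) * (if j = p then -Complex.I else 1) *
      ((if k = p then Complex.I else 1) * (if l = p then -Complex.I else 1))) *
        fourthMoment μ i j k l := by
  have hU : Matrix.diagonal (fun a : Fin d => if a = p then Complex.I else 1) ∈
      unitary (Matrix (Fin d) (Fin d) ℂ) := by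
    rw [Unitary.mem_iff]
    simp only [Matrix.star_eq_conjTranspose, Matrix.diagonal_conjTranspose,
      Matrix.diagonal_mul_diagonal]
    constructor <;> rw [← Matrix.diagonal_one] <;> congr 1 <;> funext a <;>
      by_cases h : a = p <;> simp [h]
  conv_lhs => rw [fourthMoment_unitary hμ hU]
  unfold fourthMoment
  rw [← integral_const_mul]
  congr 1
  funext v
  have hs : ∀ a : Fin d, star (if a = p then Complex.I else 1) =
      (if a = p then -Complex.I else 1) := by
    intro a; split_ifs <;> simp
  simp only [Matrix.mulVec_diagonal, star_mul', hs]
  ring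

lemma fourthMoment_eq_zero {d : ℕ} {μ : Measure (Fin d → ℂ)} (hμ : IsUniformSphereMeasure μ)
    {i j k l : Fin d} (h₁ : ¬(i = j ∧ k = l)) (h₂ : ¬(i = l ∧ k = j)) :
    fourthMoment μ i j k l = 0 := by
  -- A fixed point of multiplication by `c ≠ 1` vanishes; here `c` is a power of `I`.
  have key : ∀ c m : ℂ, m = c * m → c ≠ 1 → m = 0 := by
    intro c m h hc
    have : (c - 1) * m = 0 := by linear_combination -h
    exact (mul_eq_zero.mp this).resolve_left (sub_ne_zero.mpr hc)
  have hI : Complex.I ≠ 1 := fun h => by simpa using congrArg Complex.im h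
  have hI' : -Complex.I ≠ 1 := fun h => by simpa using congrArg Complex.im h
  have hm : (-1 : ℂ) ≠ 1 := by norm_num
  have hi := key _ _ (fourthMoment_phase hμ i i j k l)
  have hk := key _ _ (fourthMoment_phase hμ k i j k l)
  by_cases hik : k = i
  · subst hik
    apply hi
    by_cases hj : j = k <;> by_cases hl : l = k
    · exact absurd ⟨hj.symm, hl.symm⟩ h₁
    · simp [hj, hl, hI]
    · simp [hj, hl, hI]
    · simp [hj, hl, hm]
  · by_cases hj : j = i
    · subst hj
      apply hk
      have : l ≠ k := fun h => h₁ ⟨rfl, h.symm⟩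
      have h3 : j ≠ k := fun h => hik h.symm
      simp [this, h3, hI]
    · by_cases hl : l = i
      · subst hl
        apply hk
        have : j ≠ k := fun h => h₂ ⟨rfl, h.symm⟩
        have h3 : l ≠ k := fun h => hik h.symm
        simp [this, h3, hI]
      · apply hi
        simp [hj, hl, hik, hI]

/-! ### The relation between paired moments -/

/-- The reflection in the hyperplane orthogonal to `e_p + 2 e_q`; for `p ≠ q` it is
unitary with rational entries, and its row `p` is `(3/5) e_p - (4/5) e_q`. -/
def tiltReflection {d : ℕ} (p q : Fin d) : Matrix (Fin d) (Fin d) ℂ :=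
  1 - (2 / 5 : ℂ) • Matrix.vecMulVec (Pi.single p 1 + Pi.single q 2) (Pi.single p 1 + Pi.single q 2)

lemma tiltReflection_unitary {d : ℕ} {p q : Fin d} (hpq : p ≠ q) :
    tiltReflection p q ∈ unitary (Matrix (Fin d) (Fin d) ℂ) := by
  set w : Fin d → ℂ := Pi.single p 1 + Pi.single q 2 with hw
  have hww : w ⬝ᵥ w = 5 := by
    simp [hw, dotProduct_add, hpq, hpq.symm]
    norm_num
  have hws : star w = w := by
    funext a
    simp only [hw, Pi.star_apply, Pi.add_apply, Pi.single_apply]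
    split_ifs <;> simp
  have hs : star (tiltReflection p q) = tiltReflection p q := by
    rw [tiltReflection, ← hw, star_sub, star_one, star_smul, Matrix.star_eq_conjTranspose,
      Matrix.conjTranspose_vecMulVec, hws]
    congr 2
    simp
  have hsq : tiltReflection p q * tiltReflection p q = 1 := by
    have h5 : Matrix.vecMulVec w w * Matrix.vecMulVec w w = (5 : ℂ) • Matrix.vecMulVec w w := by
      rw [Matrix.vecMulVec_mul_vecMulVec, hww]
      ext a b
      simp [Matrix.vecMulVec_apply]
      ring
    rw [tiltReflection, ← hw, sub_mul, mul_sub, mul_sub, one_mul, one_mul, mul_one, smul_mul_smul_comm,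
      h5]
    module
  rw [Unitary.mem_iff, hs]
  exact ⟨hsq, hsq⟩

lemma tiltReflection_mulVec {d : ℕ} {p q : Fin d} (hpq : p ≠ q) (v : Fin d → ℂ) :
    (tiltReflection p q).mulVec v p = 3 / 5 * v p - 4 / 5 * v q := by
  simp [tiltReflection, Matrix.sub_mulVec, Matrix.smul_mulVec, Matrix.vecMulVec_mulVec,
    add_dotProduct, hpq]
  ring

lemma fourthMoment_comm {d : ℕ} (μ : Measure (Fin d → ℂ)) (i j k l : Fin d) :
    fourthMoment μ i j k l = fourthMoment μ k j i l := by
  unfold fourthMoment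
  congr 1
  funext v
  ring

lemma fourthMoment_swap {d : ℕ} (μ : Measure (Fin d → ℂ)) (i j k l : Fin d) :
    fourthMoment μ i j k l = fourthMoment μ k l i j := by
  unfold fourthMoment
  congr 1
  funext v
  ring

/-- The relation `∫ |v_p|⁴ = ∫ |(3/5) v_p - (4/5) v_q|⁴`, expanded; only the moments in which
every coordinate is paired with its own conjugate survive. -/
lemma fourthMoment_tilt {d : ℕ} {μ : Measure (Fin d → ℂ)} (hμ : IsUniformSphereMeasure μ)
    {p q : Fin d} (hpq : p ≠ q) :
    544 * fourthMoment μ p p p p =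
      256 * fourthMoment μ q q q q + 576 * fourthMoment μ p p q q := by
  let y : Fin 2 → Fin d := ![p, q]
  let c : Fin 2 → ℂ := ![3 / 5, -(4 / 5)]
  have h := fourthMoment_unitary hμ (tiltReflection_unitary hpq) p p p p
  have hexp : ∀ v : Fin d → ℂ, (tiltReflection p q).mulVec v p *
      star ((tiltReflection p q).mulVec v p) * ((tiltReflection p q).mulVec v p *
      star ((tiltReflection p q).mulVec v p)) =
      ∑ a, ∑ b, ∑ e, ∑ f, c a * c b * c e * c f *
        (v (y a) * star (v (y b)) * (v (y e) * star (v (y f)))) := by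
    intro v
    rw [tiltReflection_mulVec hpq]
    simp [Fin.sum_univ_two, c, y]
    ring
  simp_rw [hexp] at h
  have hint : ∀ a b e f, Integrable (fun v : Fin d → ℂ => c a * c b * c e * c f *
        (v (y a) * star (v (y b)) * (v (y e) * star (v (y f))))) μ :=
    fun a b e f => (integrable_fourth hμ _ _ _ _).const_mul _
  have h' : fourthMoment μ p p p p = ∑ a, ∑ b, ∑ e, ∑ f, c a * c b * c e * c f *
      fourthMoment μ (y a) (y b) (y e) (y f) := by
    rw [h, integral_finsetSum _ fun a _ => integrable_finsetSum _ fun b _ =>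
      integrable_finsetSum _ fun e _ => integrable_finsetSum _ fun f _ => hint a b e f]
    refine Finset.sum_congr rfl fun a _ => ?_
    rw [integral_finsetSum _ fun b _ =>
      integrable_finsetSum _ fun e _ => integrable_finsetSum _ fun f _ => hint a b e f]
    refine Finset.sum_congr rfl fun b _ => ?_
    rw [integral_finsetSum _ fun e _ => integrable_finsetSum _ fun f _ => hint a b e f]
    refine Finset.sum_congr rfl fun e _ => ?_
    rw [integral_finsetSum _ fun f _ => hint a b e f]
    refine Finset.sum_congr rfl fun f _ => ?_
    rw [integral_const_mul]
    rfl
  have z : ∀ {i j k l : Fin d}, ¬(i = j ∧ k = l) → ¬(i = l ∧ k = j) →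
    fourthMoment μ i j k l = 0 := fun h₁ h₂ => fourthMoment_eq_zero hμ h₁ h₂
  have hqp := hpq.symm
  have e1 : fourthMoment μ q q p p = fourthMoment μ p p q q := fourthMoment_swap μ _ _ _ _
  have e2 : fourthMoment μ q p p q = fourthMoment μ p p q q := fourthMoment_comm μ _ _ _ _
  have e3 : fourthMoment μ p q q p = fourthMoment μ p p q q := by
    rw [fourthMoment_comm, e1]
  simp only [Fin.sum_univ_two, c, y, Matrix.cons_val_zero, Matrix.cons_val_one] at h'
  rw [e1, e2, e3, z (i := p) (j := p) (k := p) (l := q) (by simp [hpq]) (by simp [hpq]),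
    z (i := p) (j := p) (k := q) (l := p) (by simp [hqp]) (by simp [hqp]),
    z (i := p) (j := q) (k := p) (l := p) (by simp [hpq]) (by simp [hpq]),
    z (i := q) (j := p) (k := p) (l := p) (by simp [hqp]) (by simp [hqp]),
    z (i := q) (j := q) (k := q) (l := p) (by simp [hqp]) (by simp [hqp]),
    z (i := q) (j := q) (k := p) (l := q) (by simp [hpq]) (by simp [hpq]),
    z (i := q) (j := p) (k := q) (l := q) (by simp [hqp]) (by simp [hqp]),
    z (i := p) (j := q) (k := q) (l := q) (by simp [hpq]) (by simp [hpq]),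
    z (i := p) (j := q) (k := p) (l := q) (by simp [hpq]) (by simp [hpq]),
    z (i := q) (j := p) (k := q) (l := p) (by simp [hqp]) (by simp [hqp])] at h'
  linear_combination 625 * h'

/-! ### Normalization and the values of the moments -/

lemma sum_fourthMoment {d : ℕ} {μ : Measure (Fin d → ℂ)} (hμ : IsUniformSphereMeasure μ) :
    ∑ i, ∑ k, fourthMoment μ i i k k = 1 := by
  have := hμ.1
  unfold fourthMoment
  have : ∀ i, ∑ k, ∫ v, v i * star (v i) * (v k * star (v k)) ∂μ =
      ∫ v, ∑ k, v i * star (v i) * (v k * star (v k)) ∂μ := fun i =>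
    (integral_finsetSum _ fun k _ => integrable_fourth hμ i i k k).symm
  simp_rw [this]
  rw [← integral_finsetSum _ fun i _ => integrable_finsetSum _ fun k _ =>
    integrable_fourth hμ i i k k]
  have h1 : (fun v : Fin d → ℂ => ∑ i, ∑ k, v i * star (v i) * (v k * star (v k)))
      =ᵐ[μ] fun _ => 1 := by
    filter_upwards [ae_mem_sphere hμ] with v hv
    have : ∑ i, v i * star (v i) = 1 := by
      rw [← hv]
      exact Finset.sum_congr rfl fun i _ => mul_comm _ _
    rw [← Finset.sum_mul_sum, this, one_mul]
  rw [integral_congr_ae h1]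
  simp

/-- All fourth moments: `d(d+1) ∫ vᵢ v̄ⱼ vₖ v̄ₗ = δᵢⱼδₖₗ + δᵢₗδₖⱼ`. -/
lemma fourthMoment_eq {d : ℕ} {μ : Measure (Fin d → ℂ)} (hμ : IsUniformSphereMeasure μ)
    (i j k l : Fin d) :
    (d : ℂ) * (d + 1) * fourthMoment μ i j k l =
      (if i = j ∧ k = l then 1 else 0) + (if i = l ∧ k = j then 1 else 0) := by
  obtain ⟨A, hA⟩ : ∃ A, ∀ p, fourthMoment μ p p p p = A := by
    refine ⟨fourthMoment μ i i i i, fun p => ?_⟩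
    by_cases hp : p = i
    · rw [hp]
    · have h1 := fourthMoment_tilt hμ hp
      have h2 := fourthMoment_tilt hμ (Ne.symm hp)
      rw [fourthMoment_swap μ i i p p] at h2
      linear_combination (h1 - h2) / 800
  have hB : ∀ p q, p ≠ q → fourthMoment μ p p q q = A / 2 := by
    intro p q hpq
    have h1 := fourthMoment_tilt hμ hpq
    rw [hA p, hA q] at h1
    linear_combination -h1 / 576
  have hAB : ∀ p q, fourthMoment μ p p q q =
      A / 2 * (1 + if p = q then 1 else 0) := by
    intro p q
    by_cases hpq : p = q
    · subst hpq
      rw [hA, if_pos rfl]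
      ring
    · rw [hB p q hpq]
      simp [hpq]
  have hsum := sum_fourthMoment hμ
  simp only [hAB, ← Finset.mul_sum, Finset.sum_add_distrib, Finset.sum_ite_eq, Finset.mem_univ,
    if_true, Finset.sum_const, Finset.card_univ, Fintype.card_fin, nsmul_eq_mul, mul_one] at hsum
  by_cases h₁ : i = j ∧ k = l
  · obtain ⟨rfl, rfl⟩ := h₁
    rw [hAB]
    have : (i = k ∧ k = i) ↔ i = k := ⟨fun h => h.1, fun h => ⟨h, h.symm⟩⟩
    simp only [this, and_self, if_true]
    linear_combination (1 + if i = k then 1 else 0) * hsum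
  · by_cases h₂ : i = l ∧ k = j
    · obtain ⟨rfl, rfl⟩ := h₂
      have hne : i ≠ k := fun h => h₁ ⟨h, h.symm⟩
      rw [fourthMoment_comm, hAB]
      simp only [hne, hne.symm, and_self, if_true, if_false]
      linear_combination hsum
    · rw [fourthMoment_eq_zero hμ h₁ h₂]
      simp [h₁, h₂]

/-- the near-isometry identity for the uniform POVM:
`(d+1) ∫ d ⟨v|X|v⟩ |v⟩⟨v| dv = X + tr(X) I`, the integral taken entrywise with respect
to the uniform probability measure on the unit sphere of `ℂ^d`. -/
theorem uniform_sphere_second_moment {d : ℕ} (hd : 1 ≤ d)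
    (μ : Measure (Fin d → ℂ)) (hμ : IsUniformSphereMeasure μ)
    (X : Matrix (Fin d) (Fin d) ℂ) :
    (Matrix.of fun i j =>
        ((d : ℂ) + 1) * ∫ v, (d : ℂ) * (star v ⬝ᵥ X.mulVec v) * (v i * star (v j)) ∂μ) =
      X + X.trace • (1 : Matrix (Fin d) (Fin d) ℂ) := by
  ext i j
  have hexp : ∀ v : Fin d → ℂ, (d : ℂ) * (star v ⬝ᵥ X.mulVec v) * (v i * star (v j)) =
      ∑ k, ∑ l, (d : ℂ) * X k l * (v i * star (v j) * (v l * star (v k))) := by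
    intro v
    simp only [dotProduct, Matrix.mulVec, Pi.star_apply, Finset.mul_sum, Finset.sum_mul]
    refine Finset.sum_congr rfl fun k _ => Finset.sum_congr rfl fun l _ => ?_
    ring
  have hint : ∀ k l, Integrable (fun v : Fin d → ℂ =>
      (d : ℂ) * X k l * (v i * star (v j) * (v l * star (v k)))) μ :=
    fun k l => (integrable_fourth hμ _ _ _ _).const_mul _
  have hI : ∫ v, (d : ℂ) * (star v ⬝ᵥ X.mulVec v) * (v i * star (v j)) ∂μ =
      ∑ k, ∑ l, (d : ℂ) * X k l * fourthMoment μ i j l k := by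
    simp_rw [hexp]
    rw [integral_finsetSum _ fun k _ => integrable_finsetSum _ fun l _ => hint k l]
    refine Finset.sum_congr rfl fun k _ => ?_
    rw [integral_finsetSum _ fun l _ => hint k l]
    refine Finset.sum_congr rfl fun l _ => ?_
    rw [integral_const_mul]
    rfl
  have hterm : ∀ k l, ((d : ℂ) + 1) * ((d : ℂ) * X k l * fourthMoment μ i j l k) =
      (if l = k then (if i = j then X k l else 0) else 0) +
        (if i = k then (if l = j then X k l else 0) else 0) := by
    intro k l
    have h := fourthMoment_eq hμ i j l k
    have h' : ((d : ℂ) + 1) * ((d : ℂ) * X k l * fourthMoment μ i j l k) =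
        X k l * ((if i = j ∧ l = k then 1 else 0) + (if i = k ∧ l = j then 1 else 0)) := by
      rw [← h]
      ring
    rw [h', mul_add]
    congr 1
    · by_cases a : i = j <;> by_cases b : l = k <;> simp [a, b]
    · by_cases a : i = k <;> by_cases b : l = j <;> simp [a, b]
  rw [Matrix.of_apply, hI]
  simp only [Finset.mul_sum, hterm, Finset.sum_add_distrib]
  have s1 : ∑ k, ∑ l, (if l = k then (if i = j then X k l else 0) else 0) =
      if i = j then X.trace else 0 := by
    by_cases h : i = j <;> simp [h, Matrix.trace]
  have s2 : ∑ k, ∑ l, (if i = k then (if l = j then X k l else 0) else 0) = X i j := by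
    rw [Finset.sum_eq_single i]
    · simp
    · intro k _ hk
      simp [hk.symm]
    · simp
  rw [s1, s2, Matrix.add_apply, Matrix.smul_apply, Matrix.one_apply, smul_eq_mul, mul_ite,
    mul_one, mul_zero, add_comm]

end
end

section
/- For every d ≥ 1 and every integer k ≥ 1, ∫_{S^d} (|v⟩⟨v|)^{⊗k} dv = C(d+k−1, k)^{-1} · P_Sym^{(k)}, where the integral is taken entrywise with respect to the uniform probability measure dv on the unit sphere S^d of ℂ^d, C(d+k−1,k) is the binomial coefficient, and P_Sym^{(k)} is the orthogonal projector onto the symmetric subspace of (ℂ^d)^{⊗k}. -/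
/-!
The frame operator of a unitarily invariant probability measure on the sphere is determined by two
facts. Invariance under diagonal unitaries makes the moment at `(a, b)` vanish unless `a` and `b`
are rearrangements of each other (`moment_eq_zero`). Invariance under all unitaries gives
`∫ |∑ x_j v_j|^{2k} = c ‖x‖^{2k}` with `c = ∫ |v_0|^{2k}` (`integral_linear_form`).

Expanding both sides for real `x` yields an identity of polynomials in `x`. With `N` the number of
rearrangements of `a`, the coefficient at twice the exponent of `∏ₜ X_{a t}` is `N²` times the
diagonal moment on the left and `N c` on the right, so the diagonal moment is `c / N`
(`contentCard_mul_moment`). By orbit-stabilizer `1 / N` is the entry of the symmetric projector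
(`symProj_apply_eq`). Finally `c` is found by taking traces: the frame operator has trace `1`
(`sum_moment`), and the symmetric projector has trace equal to the number of multisets of size `k`
in a set of size `d`, which is `C(d+k-1, k)` (`sum_inv_contentCard`).
-/

open MeasureTheory Matrix Finset
open scoped BigOperators Kronecker ComplexOrder

noncomputable section

/-- The orthogonal projector onto the symmetric subspace of `(ℂ^d)^{⊗k}`: the average
of all permutation operators on the `k` tensor factors. -/
def symProj (d k : ℕ) : Matrix (Fin k → Fin d) (Fin k → Fin d) ℂ :=
  fun a b => (k.factorial : ℂ)⁻¹ *
    ((Finset.univ.filter fun π : Equiv.Perm (Fin k) => a = b ∘ π).card : ℂ)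

/-! ### Indices up to permutation -/

/-- The content (or type) of the index `a`: the multiset of its values. -/
def content {d k : ℕ} (a : Fin k → Fin d) : Sym (Fin d) k :=
  ⟨Finset.univ.val.map a, by simp⟩

/-- The number of indices with the same content as `a`. -/
def contentCard {d k : ℕ} (a : Fin k → Fin d) : ℕ :=
  #{b : Fin k → Fin d | content b = content a}

lemma count_content {d k : ℕ} (a : Fin k → Fin d) (j : Fin d) :
    (content a : Multiset (Fin d)).count j = #{t | a t = j} := by
  simp only [content, Sym.coe_mk, Multiset.count_map, Finset.card_def, Finset.filter_val]
  simp only [eq_comm]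

lemma content_comp_perm {d k : ℕ} (b : Fin k → Fin d) (π : Equiv.Perm (Fin k)) :
    content (b ∘ π) = content b := by
  apply Subtype.ext
  change Multiset.map (b ∘ π) univ.val = Multiset.map b univ.val
  rw [← Multiset.map_map, Multiset.map_univ_val_equiv]

lemma content_eq_iff {d k : ℕ} {a b : Fin k → Fin d} :
    content a = content b ↔ ∃ π : Equiv.Perm (Fin k), a = b ∘ π := by
  refine ⟨fun h => ?_, ?_⟩
  · have e : ∀ j, Nonempty ({t // a t = j} ≃ {t // b t = j}) := fun j => by
      rw [← Fintype.card_eq, Fintype.card_subtype, Fintype.card_subtype, ← count_content,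
        ← count_content, h]
    replace e := fun j => (e j).some
    refine ⟨(Equiv.sigmaFiberEquiv a).symm.trans
      ((Equiv.sigmaCongrRight e).trans (Equiv.sigmaFiberEquiv b)), ?_⟩
    funext t
    exact ((e (a t) ⟨t, rfl⟩).2).symm
  · rintro ⟨π, rfl⟩
    exact content_comp_perm b π

lemma content_surjective {d k : ℕ} :
    Function.Surjective (content : (Fin k → Fin d) → Sym (Fin d) k) := by
  rintro ⟨s, hs⟩
  induction s using Quotient.inductionOn with
  | h l =>
    have hl : l.length = k := hs
    subst hl
    refine ⟨l.get, Subtype.ext ?_⟩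
    change Multiset.map l.get univ.val = l
    simp

/-- Orbit-stabilizer: the entry of the symmetric projector at `(a, b)` is the inverse of the
size of the orbit of `a` under permutations when `b` lies in that orbit, and zero otherwise. -/
lemma symProj_apply_eq {d k : ℕ} (a b : Fin k → Fin d) :
    symProj d k a b = if content a = content b then (contentCard a : ℂ)⁻¹ else 0 := by
  unfold symProj
  split_ifs with h
  · have hconst : ∀ c ∈ ({c | content c = content a} : Finset (Fin k → Fin d)),
        #{π : Equiv.Perm (Fin k) | c = b ∘ π} = #{π : Equiv.Perm (Fin k) | a = b ∘ π} := by
      intro c hc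
      obtain ⟨σ, rfl⟩ := content_eq_iff.1 (Finset.mem_filter.1 hc).2
      refine Finset.card_equiv (Equiv.mulRight σ⁻¹) fun π => ?_
      simp only [mem_filter, mem_univ, true_and, Equiv.coe_mulRight, funext_iff,
        Function.comp_apply, Equiv.Perm.coe_mul]
      refine ⟨fun H t => by simpa using H (σ⁻¹ t), fun H t => by simpa using H (σ t)⟩
    have hsum : ∑ c ∈ ({c | content c = content a} : Finset (Fin k → Fin d)),
        #{π : Equiv.Perm (Fin k) | c = b ∘ π} = k.factorial := by
      have := Finset.card_eq_sum_card_fiberwise (s := (univ : Finset (Equiv.Perm (Fin k))))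
        (t := ({c | content c = content a} : Finset (Fin k → Fin d)))
        (f := fun π : Equiv.Perm (Fin k) => b ∘ π) (by
          intro π _
          simp [content_comp_perm, h])
      rw [Finset.card_univ, Fintype.card_perm, Fintype.card_fin] at this
      rw [this]
      simp only [eq_comm]
    rw [Finset.sum_congr rfl hconst, Finset.sum_const, smul_eq_mul] at hsum
    change contentCard a * _ = _ at hsum
    rw [← hsum]
    have h0 : contentCard a * #{π : Equiv.Perm (Fin k) | a = b ∘ π} ≠ 0 := by
      rw [hsum]; exact k.factorial_ne_zero
    have h1 : (contentCard a : ℂ) ≠ 0 := by exact_mod_cast left_ne_zero_of_mul h0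
    have h2 : (#{π : Equiv.Perm (Fin k) | a = b ∘ π} : ℂ) ≠ 0 := by
      exact_mod_cast right_ne_zero_of_mul h0
    push_cast
    field_simp
  · rw [Finset.card_eq_zero.2, Nat.cast_zero, mul_zero]
    exact Finset.filter_eq_empty_iff.2 fun π _ hπ => h (content_eq_iff.2 ⟨π, hπ⟩)

lemma contentCard_pos {d k : ℕ} (a : Fin k → Fin d) : 0 < contentCard a :=
  Finset.card_pos.2 ⟨a, by simp⟩

/-- Both sides count the multisets of size `k` in `Fin d`: every content contributes `1` to the sum.
The sum is the trace of the symmetric projector. -/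
lemma sum_inv_contentCard (d k : ℕ) :
    ∑ a : Fin k → Fin d, (contentCard a : ℂ)⁻¹ = ((d + k - 1).choose k : ℂ) := by
  have hfib : ∀ s : Sym (Fin d) k,
      ∑ a with content a = s, (contentCard a : ℂ)⁻¹ = 1 := by
    intro s
    obtain ⟨a, rfl⟩ := content_surjective s
    have : ∀ c ∈ ({c | content c = content a} : Finset (Fin k → Fin d)),
        (contentCard c : ℂ)⁻¹ = (contentCard a : ℂ)⁻¹ := by
      intro c hc
      rw [contentCard, (Finset.mem_filter.1 hc).2, ← contentCard]
    rw [Finset.sum_congr rfl this, Finset.sum_const, nsmul_eq_mul]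
    exact mul_inv_cancel₀ (by exact_mod_cast (contentCard_pos a).ne')
  rw [← Finset.sum_fiberwise univ content, Finset.sum_congr rfl fun s _ => hfib s]
  simp [Sym.card_sym_eq_choose]

/-! ### Moments of a uniform measure -/

/-- The moment of `μ` at `(a, b)`, i.e. the `(a, b)` entry of its order-`k` frame operator. -/
def moment {d k : ℕ} (μ : Measure (Fin d → ℂ)) (a b : Fin k → Fin d) : ℂ :=
  ∫ v, ∏ t, (v (a t) * star (v (b t))) ∂μ

section Moments

variable {d k : ℕ} {μ : Measure (Fin d → ℂ)}

lemma ae_norm_le_one (hμ : IsUniformSphereMeasure μ) : ∀ᵐ v ∂μ, ∀ j, ‖v j‖ ≤ 1 := by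
  have h : ∀ᵐ v ∂μ, star v ⬝ᵥ v = 1 := ae_iff.2 hμ.2.1
  filter_upwards [h] with v hv j
  have h1 : ∑ i, ‖v i‖ ^ 2 = 1 := by
    have : ((∑ i, ‖v i‖ ^ 2 : ℝ) : ℂ) = 1 := by
      rw [← hv]
      simp [dotProduct, Complex.conj_mul']
    exact_mod_cast this
  have h2 : ‖v j‖ ^ 2 ≤ 1 := h1 ▸ Finset.single_le_sum (f := fun i => ‖v i‖ ^ 2)
    (fun i _ => by positivity) (mem_univ j)
  exact (sq_le_one_iff₀ (norm_nonneg _)).1 h2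

lemma integrable_moment (hμ : IsUniformSphereMeasure μ) (a b : Fin k → Fin d) :
    Integrable (fun v : Fin d → ℂ => ∏ t, (v (a t) * star (v (b t)))) μ := by
  have := hμ.1
  refine Integrable.of_bound (C := 1)
    (Continuous.aestronglyMeasurable (by fun_prop)) ?_
  filter_upwards [ae_norm_le_one hμ] with v hv
  rw [norm_prod]
  refine Finset.prod_le_one (fun _ _ => norm_nonneg _) fun t _ => ?_
  rw [norm_mul, norm_star]
  exact mul_le_one₀ (hv _) (norm_nonneg _) (hv _)

lemma integral_mulVec (hμ : IsUniformSphereMeasure μ) {U : Matrix (Fin d) (Fin d) ℂ}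
    (hU : U ∈ unitary (Matrix (Fin d) (Fin d) ℂ)) {f : (Fin d → ℂ) → ℂ} (hf : Continuous f) :
    ∫ v, f (U.mulVec v) ∂μ = ∫ v, f v ∂μ := by
  conv_rhs => rw [← hμ.2.2 U hU]
  have hc : Continuous U.mulVec := by
    exact Continuous.matrix_mulVec continuous_const continuous_id
  rw [integral_map hc.aemeasurable hf.aestronglyMeasurable]

lemma moment_comp_perm (a b : Fin k → Fin d) (π : Equiv.Perm (Fin k)) :
    moment μ (a ∘ π) b = moment μ a b := by
  unfold moment
  congr 1
  funext v
  simp only [Finset.prod_mul_distrib, Function.comp_apply]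
  rw [Equiv.prod_comp π fun t => v (a t)]

lemma moment_comp_perm_right (a b : Fin k → Fin d) (π : Equiv.Perm (Fin k)) :
    moment μ a (b ∘ π) = moment μ a b := by
  unfold moment
  congr 1
  funext v
  simp only [Finset.prod_mul_distrib, Function.comp_apply]
  rw [Equiv.prod_comp π fun t => star (v (b t))]

lemma moment_congr {a b a' b' : Fin k → Fin d} (ha : content a = content a')
    (hb : content b = content b') : moment μ a b = moment μ a' b' := by
  obtain ⟨σ, rfl⟩ := content_eq_iff.1 ha
  obtain ⟨τ, rfl⟩ := content_eq_iff.1 hb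
  rw [moment_comp_perm, moment_comp_perm_right]

/-- Invariance under the diagonal unitary multiplying the `j`-th coordinate by `exp i` kills the
moments with different contents, because `exp i` is not a root of unity. -/
lemma moment_eq_zero (hμ : IsUniformSphereMeasure μ) {a b : Fin k → Fin d}
    (h : content a ≠ content b) : moment μ a b = 0 := by
  obtain ⟨j, hj⟩ : ∃ j, #{t | a t = j} ≠ #{t | b t = j} := by
    by_contra! H
    exact h (Subtype.ext (Multiset.ext.2 fun j => by
      exact (count_content a j).trans ((H j).trans (count_content b j).symm)))
  set z : ℂ := Complex.exp Complex.I with hz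
  have hzz : z * star z = 1 := by
    rw [hz, Complex.star_def, ← Complex.exp_conj, ← Complex.exp_add]
    simp
  set D : Fin d → ℂ := fun i => if i = j then z else 1 with hD
  have hU : Matrix.diagonal D ∈ unitary (Matrix (Fin d) (Fin d) ℂ) := by
    have h1 : Matrix.diagonal D * star (Matrix.diagonal D) = 1 := by
      rw [Matrix.star_eq_conjTranspose, Matrix.diagonal_conjTranspose, Matrix.diagonal_mul_diagonal,
        ← Matrix.diagonal_one]
      congr 1
      funext i
      by_cases hi : i = j <;> simp [hD, hi]
      simpa using hzz
    exact ⟨mul_eq_one_comm.1 h1, h1⟩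
  have key := integral_mulVec hμ hU
    (f := fun v : Fin d → ℂ => ∏ t, (v (a t) * star (v (b t)))) (by fun_prop)
  have hp : ∀ c : Fin k → Fin d, ∏ t, D (c t) = z ^ #{t | c t = j} := fun c => by
    simp [hD, Finset.prod_ite]
  have hfac : ∀ v : Fin d → ℂ,
      ∏ t, ((Matrix.diagonal D).mulVec v (a t) * star ((Matrix.diagonal D).mulVec v (b t))) =
      (z ^ #{t | a t = j} * star (z ^ #{t | b t = j})) * ∏ t, (v (a t) * star (v (b t))) := by
    intro v
    simp only [Matrix.mulVec_diagonal, star_mul', Finset.prod_mul_distrib]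
    rw [← hp, ← hp, star_prod]
    ring
  simp_rw [hfac] at key
  rw [integral_const_mul] at key
  change _ * moment μ a b = moment μ a b at key
  by_contra hne
  have h1 := mul_right_cancel₀ hne (key.trans (one_mul _).symm)
  have h2 : z ^ #{t | a t = j} = z ^ #{t | b t = j} := by
    have h3 : z ^ #{t | b t = j} * star (z ^ #{t | b t = j}) = 1 := by
      rw [star_pow, ← mul_pow, hzz, one_pow]
    have h4 : star (z ^ #{t | b t = j}) ≠ 0 := right_ne_zero_of_mul (h3 ▸ one_ne_zero)
    exact mul_right_cancel₀ h4 (h1.trans h3.symm)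
  rw [hz, ← Complex.exp_nat_mul, ← Complex.exp_nat_mul, Complex.exp_eq_exp_iff_exists_int] at h2
  obtain ⟨n, hn⟩ := h2
  have h5 : (#{t | a t = j} : ℝ) = #{t | b t = j} + n * (2 * Real.pi) := by
    have := congrArg Complex.im hn
    simpa using this
  by_cases hn0 : n = 0
  · subst hn0
    apply hj
    simpa using h5
  · refine irrational_pi ⟨((#{t | a t = j} : ℚ) - #{t | b t = j}) / (2 * n), ?_⟩
    have : (n : ℝ) ≠ 0 := by exact_mod_cast hn0
    push_cast
    rw [h5]
    field_simp
    ring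

/-! ### Powers of linear forms -/

lemma exists_unitary_row (i₀ : Fin d) (u : Fin d → ℝ) (hu : ∑ j, u j ^ 2 = 1) :
    ∃ U ∈ unitary (Matrix (Fin d) (Fin d) ℂ), ∀ j, U i₀ j = u j := by
  set w : EuclideanSpace ℂ (Fin d) := WithLp.toLp 2 fun j => (u j : ℂ) with hw
  have hnorm : ‖w‖ = 1 := by
    rw [EuclideanSpace.norm_eq, Real.sqrt_eq_one]
    simpa [hw] using hu
  have hon : Orthonormal ℂ (({i₀} : Set (Fin d)).domRestrict fun _ => w) := by
    refine ⟨fun _ => hnorm, fun i j hij => absurd (Subsingleton.elim i j) hij⟩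
  obtain ⟨b, hb⟩ := hon.exists_orthonormalBasis_extension_of_card_eq (by simp)
  have h1 : (Matrix.of fun i j => b i j) * star (Matrix.of fun i j => b i j) =
      (1 : Matrix (Fin d) (Fin d) ℂ) := by
    ext i l
    have := orthonormal_iff_ite.1 b.orthonormal l i
    rw [Matrix.mul_apply, Matrix.one_apply]
    simpa [PiLp.inner_apply, Matrix.star_apply, eq_comm (a := i)] using this
  refine ⟨Matrix.of fun i j => b i j, ⟨mul_eq_one_comm.1 h1, h1⟩, fun j => ?_⟩
  rw [Matrix.of_apply, hb i₀ rfl]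

/-- By unitary invariance, the integral of `|∑ x_j v_j|^{2k}` is a constant multiple
of `‖x‖^{2k}`. Positivity of `k` enters at `x = 0`. -/
lemma integral_linear_form (hk : 1 ≤ k) (hμ : IsUniformSphereMeasure μ) (i₀ : Fin d)
    (x : Fin d → ℝ) :
    ∫ v, (∑ j, (x j : ℂ) * v j) ^ k * star (∑ j, (x j : ℂ) * v j) ^ k ∂μ =
      (∫ v, v i₀ ^ k * star (v i₀) ^ k ∂μ) * (∑ j, (x j : ℂ) ^ 2) ^ k := by
  have hs0 : 0 ≤ ∑ j, x j ^ 2 := Finset.sum_nonneg fun j _ => sq_nonneg _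
  rcases hs0.eq_or_lt with h0 | hpos
  · have hx : ∀ j, x j = 0 := fun j => by
      have := (Finset.sum_eq_zero_iff_of_nonneg fun j _ => sq_nonneg (x j)).1 h0.symm j (mem_univ j)
      simpa using this
    simp [hx, show k ≠ 0 by omega]
  · set r := √(∑ j, x j ^ 2) with hr
    have hr2 : r ^ 2 = ∑ j, x j ^ 2 := Real.sq_sqrt hs0
    have hr0 : r ≠ 0 := (Real.sqrt_pos.2 hpos).ne'
    obtain ⟨U, hU, hrow⟩ := exists_unitary_row i₀ (fun j => x j / r) (by
      simp_rw [div_pow]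
      rw [← Finset.sum_div, hr2, div_self hpos.ne'])
    have hlin : ∀ v : Fin d → ℂ, ∑ j, (x j : ℂ) * v j = r * U.mulVec v i₀ := by
      intro v
      simp only [Matrix.mulVec, dotProduct, hrow, Finset.mul_sum]
      refine Finset.sum_congr rfl fun j _ => ?_
      have : (r : ℂ) ≠ 0 := by exact_mod_cast hr0
      push_cast
      field_simp
    have hr2' : ∑ j, (x j : ℂ) ^ 2 = (r : ℂ) ^ 2 := by
      exact_mod_cast hr2.symm
    rw [← integral_mulVec hμ hU (f := fun v => v i₀ ^ k * star (v i₀) ^ k) (by fun_prop), hr2',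
      ← integral_mul_const]
    congr 1
    funext v
    rw [hlin v]
    simp only [star_mul', Complex.star_def, Complex.conj_ofReal]
    ring

lemma integral_linear_form_eq_sum (hμ : IsUniformSphereMeasure μ) (x : Fin d → ℝ) :
    ∫ v, (∑ j, (x j : ℂ) * v j) ^ k * star (∑ j, (x j : ℂ) * v j) ^ k ∂μ =
      ∑ a : Fin k → Fin d, ∑ b : Fin k → Fin d,
        moment μ a b * ((∏ t, (x (a t) : ℂ)) * ∏ t, (x (b t) : ℂ)) := by
  have hexp : ∀ v : Fin d → ℂ,
      (∑ j, (x j : ℂ) * v j) ^ k * star (∑ j, (x j : ℂ) * v j) ^ k =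
      ∑ a : Fin k → Fin d, ∑ b : Fin k → Fin d,
        (∏ t, (v (a t) * star (v (b t)))) * ((∏ t, (x (a t) : ℂ)) * ∏ t, (x (b t) : ℂ)) := by
    intro v
    rw [star_sum, Fintype.sum_pow, Fintype.sum_pow, Finset.sum_mul_sum]
    refine Finset.sum_congr rfl fun a _ => Finset.sum_congr rfl fun b _ => ?_
    simp only [Finset.prod_mul_distrib, star_mul', Complex.star_def, Complex.conj_ofReal]
    ring
  simp_rw [hexp]
  rw [integral_finsetSum _ fun a _ => integrable_finsetSum _ fun b _ =>
    (integrable_moment hμ a b).mul_const _]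
  refine Finset.sum_congr rfl fun a _ => ?_
  rw [integral_finsetSum _ fun b _ => (integrable_moment hμ a b).mul_const _]
  refine Finset.sum_congr rfl fun b _ => ?_
  rw [integral_mul_const]
  rfl

/-! ### Comparison of coefficients -/

/-- The exponent of the monomial `∏ₜ X_{a t}`. -/
def expo (a : Fin k → Fin d) : Fin d →₀ ℕ := Multiset.toFinsupp (content a : Multiset (Fin d))

lemma expo_inj {a b : Fin k → Fin d} : expo a = expo b ↔ content a = content b := by
  rw [expo, expo, EmbeddingLike.apply_eq_iff_eq, Sym.coe_inj]

lemma prod_X_eq (a : Fin k → Fin d) :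
    ∏ t, (MvPolynomial.X (a t) : MvPolynomial (Fin d) ℂ) = MvPolynomial.monomial (expo a) 1 := by
  have : expo a = ∑ t, Finsupp.single (a t) 1 := by
    ext j
    rw [expo, Multiset.toFinsupp_apply, count_content]
    simp [Finsupp.finsetSum_apply, Finsupp.single_apply]
  rw [this, MvPolynomial.monomial_sum_one]
  rfl

/-- The identity of the two evaluations of `∫ |∑ x_j v_j|^{2k}`, as polynomials in `x`. -/
lemma moment_polynomial (hk : 1 ≤ k) (hμ : IsUniformSphereMeasure μ) (i₀ : Fin d) :
    ∑ a : Fin k → Fin d, ∑ b : Fin k → Fin d,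
        MvPolynomial.monomial (expo a + expo b) (moment μ a b) =
      ∑ a : Fin k → Fin d,
        MvPolynomial.monomial (expo a + expo a) (∫ v, v i₀ ^ k * star (v i₀) ^ k ∂μ) := by
  have hmon : ∀ (a b : Fin k → Fin d) (z : ℂ), MvPolynomial.monomial (expo a + expo b) z =
      MvPolynomial.C z * ((∏ t, MvPolynomial.X (a t)) * ∏ t, MvPolynomial.X (b t)) := by
    intro a b z
    rw [prod_X_eq, prod_X_eq, MvPolynomial.monomial_mul, MvPolynomial.C_mul_monomial, one_mul,
      mul_one]
  -- Only real `x` are available, since the second factor involves `x` without conjugation.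
  refine MvPolynomial.funext_set (fun _ => Set.range ((↑) : ℝ → ℂ))
    (fun _ => Set.infinite_range_of_injective Complex.ofReal_injective) fun y hy => ?_
  choose x hx using fun j => hy j (Set.mem_univ j)
  obtain rfl : (fun j => (x j : ℂ)) = y := funext hx
  simp only [hmon, map_sum, map_mul, map_prod, MvPolynomial.eval_C, MvPolynomial.eval_X]
  rw [← integral_linear_form_eq_sum hμ x, integral_linear_form hk hμ i₀ x, ← Finset.mul_sum,
    Fintype.sum_pow]
  simp only [← pow_two, Finset.prod_pow]

/-- Comparing the coefficients at twice the exponent of `a`: the diagonal moments are inversely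
proportional to the number of rearrangements of the index. -/
lemma contentCard_mul_moment (hk : 1 ≤ k) (hμ : IsUniformSphereMeasure μ) (i₀ : Fin d)
    (a : Fin k → Fin d) :
    contentCard a * moment μ a a = ∫ v, v i₀ ^ k * star (v i₀) ^ k ∂μ := by
  have h := congrArg (MvPolynomial.coeff (expo a + expo a)) (moment_polynomial hk hμ i₀)
  have hdbl : ∀ c : Fin k → Fin d, expo c + expo c = expo a + expo a ↔ content c = content a := by
    intro c
    rw [← expo_inj]
    refine ⟨fun H => ?_, fun H => by rw [H]⟩
    ext j
    have := DFunLike.congr_fun H j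
    simp only [Finsupp.add_apply] at this
    omega
  simp only [MvPolynomial.coeff_sum, MvPolynomial.coeff_monomial, hdbl] at h
  -- Off-diagonal moments vanish, so only pairs with both contents equal to that of `a` survive.
  have hterm : ∀ c b : Fin k → Fin d,
      (if expo c + expo b = expo a + expo a then moment μ c b else 0) =
      (if content c = content a then 1 else 0) *
        ((if content b = content a then 1 else 0) * moment μ a a) := by
    intro c b
    by_cases hcb : content c = content b
    · have : expo c = expo b := expo_inj.2 hcb
      rw [← this, ← hcb]
      simp only [hdbl]
      split_ifs with hc
      · rw [one_mul, one_mul]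
        exact moment_congr hc (hcb.symm.trans hc)
      · rw [zero_mul]
    · rw [moment_eq_zero hμ hcb, ite_self]
      split_ifs with hc hb
      · exact absurd (hc.trans hb.symm) hcb
      all_goals simp
  simp only [hterm, ← Finset.mul_sum, ← Finset.sum_mul, Finset.sum_boole] at h
  rw [← Finset.sum_filter, Finset.sum_const, nsmul_eq_mul] at h
  change (contentCard a : ℂ) * (contentCard a * _) = contentCard a * _ at h
  exact mul_left_cancel₀ (by exact_mod_cast (contentCard_pos a).ne') h

lemma sum_moment (hμ : IsUniformSphereMeasure μ) :
    ∑ a : Fin k → Fin d, moment μ a a = 1 := by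
  have := hμ.1
  unfold moment
  rw [← integral_finsetSum _ fun a _ => integrable_moment hμ a a]
  have h : ∀ᵐ v ∂μ, star v ⬝ᵥ v = 1 := ae_iff.2 hμ.2.1
  have h' : (fun v : Fin d → ℂ => ∑ a : Fin k → Fin d, ∏ t, (v (a t) * star (v (a t)))) =ᵐ[μ]
      fun _ => 1 := by
    filter_upwards [h] with v hv
    rw [← Fintype.sum_pow (fun j => v j * star (v j))]
    simp only [dotProduct, Pi.star_apply, mul_comm] at hv
    rw [hv, one_pow]
  rw [integral_congr_ae h']
  simp

end Moments

/-- the order-`k` frame operator of the uniform measure on the unit sphere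
of `ℂ^d`: `∫ (|v⟩⟨v|)^{⊗k} dv = C(d+k−1, k)⁻¹ P_Sym^{(k)}`, the integral taken entrywise. -/
theorem uniform_sphere_frame_operator {d k : ℕ} (hd : 1 ≤ d) (hk : 1 ≤ k)
    (μ : Measure (Fin d → ℂ)) (hμ : IsUniformSphereMeasure μ) :
    (Matrix.of fun a b : Fin k → Fin d =>
        ∫ v, ∏ t, (v (a t) * star (v (b t))) ∂μ) =
      ((d + k - 1).choose k : ℂ)⁻¹ • symProj d k := by
  let i₀ : Fin d := ⟨0, hd⟩
  set c : ℂ := ∫ v, v i₀ ^ k * star (v i₀) ^ k ∂μ with hc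
  have hdiag : ∀ a : Fin k → Fin d, moment μ a a = c * (contentCard a : ℂ)⁻¹ := fun a => by
    rw [hc, ← contentCard_mul_moment hk hμ i₀ a]
    have : (contentCard a : ℂ) ≠ 0 := by exact_mod_cast (contentCard_pos a).ne'
    field_simp
  have hnorm : c = ((d + k - 1).choose k : ℂ)⁻¹ := by
    have h := sum_moment (k := k) hμ
    simp only [hdiag] at h
    rw [← Finset.mul_sum, sum_inv_contentCard] at h
    exact eq_inv_of_mul_eq_one_left h
  ext a b
  rw [Matrix.of_apply, Matrix.smul_apply, smul_eq_mul, symProj_apply_eq, ← hnorm]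
  change moment μ a b = _
  split_ifs with hab
  · rw [← hdiag a]
    exact moment_congr rfl hab.symm
  · rw [mul_zero, moment_eq_zero hμ hab]

end
end
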